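/- Consider the polynomial p(c,λ) = −196 + 172c − c^2 + 213444λ^2 − 329868cλ^2 + 30429c^2λ^2 + 74970c^3λ^2 + 11025c^4λ^2 in two variables c, λ over ℂ. Then (i) p(c,λ) = 441·λ^2·(c−1)^2·(22+5c)^2 − (c^2 − 172c + 196) identically, and (ii) p is irreducible as an element of the polynomial ring ℂ[c,λ] (i.e. as an element of MvPolynomial (Fin 2) ℂ). -/

import Mathlib

open MvPolynomial

/-!
As a polynomial in `λ`, `p = A λ² - q` with `A = (21 (c - 1) (22 + 5c))²` and
`q = c² - 172c + 196`. The discriminant of `q` is `28800 ≠ 0`, so `q` has a simple prime factor,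
and `A` is coprime to `q` because `q(1) = 25` and `25 q(-22/5) = 24304` do not vanish. Hence
Eisenstein's criterion applies at any prime factor of `q`. The integers `441`, `25`, `24304` and
`28800` have only the prime factors `2, 3, 5, 7, 31`, whose product is `6510`.
-/

open scoped Polynomial

section Eisenstein

variable {R : Type*} [CommRing R] [IsDomain R] {a b : R} {n : ℕ}

theorem irreducible_C_mul_X_pow_sub_C_of_prime {π : R} (hπ : Prime π) (hdvd : π ∣ b)
    (hsq : ¬ π ^ 2 ∣ b) (hab : IsRelPrime a b) (hn : n ≠ 0) :
    Irreducible (Polynomial.C a * Polynomial.X ^ n - Polynomial.C b : R[X]) := by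
  have hπa : ¬ π ∣ a := fun h ↦ hπ.not_isUnit (hab h hdvd)
  have ha : a ≠ 0 := fun h ↦ hπa (h ▸ dvd_zero π)
  set f : R[X] := Polynomial.C a * Polynomial.X ^ n - Polynomial.C b with hf
  have hdeg : f.degree = n := by
    rw [hf, Polynomial.degree_sub_C] <;> rw [Polynomial.degree_C_mul_X_pow n ha]
    exact_mod_cast hn.bot_lt
  have hcoeff_n : f.coeff n = a := by simp [hf, Polynomial.coeff_C, hn]
  have hcoeff_zero : f.coeff 0 = -b := by simp [hf, hn.symm]
  refine Polynomial.irreducible_of_eisenstein_criterion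
    ((Ideal.span_singleton_prime hπ.ne_zero).2 hπ) ?_ (fun m hm ↦ ?_) ?_ ?_ fun r hr ↦ ?_
  · rwa [Polynomial.leadingCoeff, Polynomial.natDegree_eq_of_degree_eq_some hdeg, hcoeff_n,
      Ideal.mem_span_singleton]
  · have hmn : m ≠ n := by rintro rfl; exact hm.ne hdeg.symm
    rw [Ideal.mem_span_singleton]
    rcases eq_or_ne m 0 with rfl | hm0
    · rwa [hcoeff_zero, dvd_neg]
    · simp [hf, Polynomial.coeff_X_pow, Polynomial.coeff_C, hmn, hm0]
  · rw [hdeg]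
    exact_mod_cast hn.bot_lt
  · rwa [hcoeff_zero, Ideal.span_singleton_pow, Ideal.mem_span_singleton, dvd_neg]
  · rw [Polynomial.C_dvd_iff_dvd_coeff] at hr
    exact hab (hcoeff_n ▸ hr n) (dvd_neg.1 (hcoeff_zero ▸ hr 0))

theorem irreducible_C_mul_X_pow_sub_C_of_squarefree [WfDvdMonoid R] [DecompositionMonoid R]
    (hb : Squarefree b) (hbu : ¬ IsUnit b) (hab : IsRelPrime a b) (hn : n ≠ 0) :
    Irreducible (Polynomial.C a * Polynomial.X ^ n - Polynomial.C b : R[X]) := by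
  obtain ⟨π, hπ, hdvd⟩ := WfDvdMonoid.exists_irreducible_factor hbu hb.ne_zero
  have hsq : ¬ π ^ 2 ∣ b := fun h ↦ hπ.not_isUnit (hb π (sq π ▸ h))
  exact irreducible_C_mul_X_pow_sub_C_of_prime hπ.prime hdvd hsq hab hn

end Eisenstein

section Coprimality

theorem isUnit_natCast_of_dvd_pow {R : Type*} [CommSemiring R] {m d : ℕ} (hm : IsUnit (m : R))
    (k : ℕ) (hd : d ∣ m ^ k) : IsUnit (d : R) :=
  isUnit_of_dvd_unit (mod_cast Nat.cast_dvd_cast (α := R) hd) (hm.pow k)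

theorem isCoprime_of_isUnit_mul_add_mul {R : Type*} [CommSemiring R] {x y : R} (u v : R)
    (h : IsUnit (u * x + v * y)) : IsCoprime x y := by
  obtain ⟨w, hw⟩ := h.exists_left_inv
  exact ⟨w * u, w * v, by rw [mul_assoc, mul_assoc, ← mul_add, hw]⟩

theorem separable_X_sq_sub_C_mul_X_add_C {R : Type*} [CommRing R] {b c : R}
    (h : IsUnit (b ^ 2 - 4 * c)) :
    (Polynomial.X ^ 2 - Polynomial.C b * Polynomial.X + Polynomial.C c : R[X]).Separable := by
  refine isCoprime_of_isUnit_mul_add_mul (-4) (2 * Polynomial.X - Polynomial.C b) ?_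
  convert h.map Polynomial.C using 1
  simp only [Polynomial.derivative_add, Polynomial.derivative_X_sq, Polynomial.derivative_C_mul,
    Polynomial.derivative_X, Polynomial.derivative_C, map_sub, map_mul, map_pow, map_ofNat]
  ring

end Coprimality

section Factor

variable (R : Type*) [CommRing R]

/-- The quadratic `q = c² - 172c + 196` for which `-q` is the part of `p` constant in `λ`. -/
noncomputable def constQuadratic : R[X] :=
  Polynomial.X ^ 2 - Polynomial.C 172 * Polynomial.X + Polynomial.C 196

/-- The square root `21 (c - 1) (22 + 5c)` of the coefficient of `λ²` in `p`. -/
noncomputable def leadingRoot : R[X] :=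
  21 * (Polynomial.X - 1) * (22 + 5 * Polynomial.X)

theorem not_isUnit_constQuadratic [IsDomain R] : ¬ IsUnit (constQuadratic R) := by
  refine Polynomial.not_isUnit_of_natDegree_pos _ ?_
  have hdeg : (constQuadratic R).natDegree = 2 := by
    rw [constQuadratic]
    compute_degree!
  omega

variable {R}

theorem separable_constQuadratic (h : IsUnit (6510 : R)) : (constQuadratic R).Separable := by
  have hdisc : IsUnit (28800 : R) :=
    mod_cast isUnit_natCast_of_dvd_pow (mod_cast h) (d := 28800) 7 (by norm_num)
  refine separable_X_sq_sub_C_mul_X_add_C ?_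
  convert hdisc using 1
  norm_num

theorem isCoprime_leadingRoot_constQuadratic (h : IsUnit (6510 : R)) :
    IsCoprime (leadingRoot R) (constQuadratic R) := by
  have hunit (d : ℕ) (hd : d ∣ 6510 ^ 4) : IsUnit (d : R[X]) := by
    simpa only [map_natCast] using
      (isUnit_natCast_of_dvd_pow (mod_cast h) 4 hd).map (Polynomial.C : R →+* R[X])
  have hconst : IsCoprime (21 : R[X]) (constQuadratic R) :=
    isCoprime_of_isUnit_mul_add_mul 1 0 (by simpa using hunit 21 (by norm_num))
  have hone : IsCoprime (Polynomial.X - 1) (constQuadratic R) := by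
    refine isCoprime_of_isUnit_mul_add_mul (171 - Polynomial.X) 1 ?_
    convert hunit 25 (by norm_num) using 1
    simp only [constQuadratic, map_ofNat, Nat.cast_ofNat]
    ring
  have hlin : IsCoprime (22 + 5 * Polynomial.X) (constQuadratic R) := by
    refine isCoprime_of_isUnit_mul_add_mul (882 - 5 * Polynomial.X) 25 ?_
    convert hunit 24304 (by norm_num) using 1
    simp only [constQuadratic, map_ofNat, Nat.cast_ofNat]
    ring
  exact (hconst.mul_left hone).mul_left hlin

theorem irreducible_C_leadingRoot_sq_mul_X_sq_sub_C_constQuadratic [IsDomain R]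
    [UniqueFactorizationMonoid R] (h : IsUnit (6510 : R)) :
    Irreducible (Polynomial.C (leadingRoot R ^ 2) * Polynomial.X ^ 2 -
      Polynomial.C (constQuadratic R)) :=
  irreducible_C_mul_X_pow_sub_C_of_squarefree (separable_constQuadratic h).squarefree
    (not_isUnit_constQuadratic R) (isCoprime_leadingRoot_constQuadratic h).pow_left.isRelPrime
    two_ne_zero

theorem equivMvPolynomial_C_leadingRoot_sq_mul_X_sq_sub_C_constQuadratic :
    Polynomial.Bivariate.equivMvPolynomial R
        (Polynomial.C (leadingRoot R ^ 2) * Polynomial.X ^ 2 - Polynomial.C (constQuadratic R)) =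
      441 * X 1 ^ 2 * (X 0 - 1) ^ 2 * (22 + 5 * X 0) ^ 2 - (X 0 ^ 2 - 172 * X 0 + 196) := by
  simp only [leadingRoot, constQuadratic, map_sub, map_add, map_mul, map_pow, map_ofNat, map_one,
    Polynomial.Bivariate.equivMvPolynomial_C_X, Polynomial.Bivariate.equivMvPolynomial_X]
  ring

end Factor

theorem shapovalov6_factor_identity_and_irreducible_general {R : Type*} [CommRing R] [IsDomain R]
    [UniqueFactorizationMonoid R] (h : IsUnit (6510 : R)) :
    let c : MvPolynomial (Fin 2) R := X 0
    let l : MvPolynomial (Fin 2) R := X 1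
    let p : MvPolynomial (Fin 2) R :=
      -196 + 172 * c - c ^ 2 + 213444 * l ^ 2 - 329868 * c * l ^ 2
        + 30429 * c ^ 2 * l ^ 2 + 74970 * c ^ 3 * l ^ 2 + 11025 * c ^ 4 * l ^ 2
    p = 441 * l ^ 2 * (c - 1) ^ 2 * (22 + 5 * c) ^ 2 - (c ^ 2 - 172 * c + 196)
      ∧ Irreducible p := by
  intro c l p
  have hp : p = 441 * l ^ 2 * (c - 1) ^ 2 * (22 + 5 * c) ^ 2 - (c ^ 2 - 172 * c + 196) := by
    simp only [p]
    ring
  refine ⟨hp, ?_⟩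
  rw [hp, ← equivMvPolynomial_C_leadingRoot_sq_mul_X_sq_sub_C_constQuadratic,
    MulEquiv.irreducible_iff]
  exact irreducible_C_leadingRoot_sq_mul_X_sq_sub_C_constQuadratic h

/-- The polynomial `p(c,λ) = -196 + 172c - c² + 213444λ² - 329868cλ² + 30429c²λ²
+ 74970c³λ² + 11025c⁴λ²` satisfies
`p = 441λ²(c-1)²(22+5c)² - (c² - 172c + 196)` identically, and is irreducible
in `ℂ[c,λ]`. -/
theorem shapovalov6_factor_identity_and_irreducible :
    let c : MvPolynomial (Fin 2) ℂ := X 0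
    let l : MvPolynomial (Fin 2) ℂ := X 1
    let p : MvPolynomial (Fin 2) ℂ :=
      -196 + 172 * c - c ^ 2 + 213444 * l ^ 2 - 329868 * c * l ^ 2
        + 30429 * c ^ 2 * l ^ 2 + 74970 * c ^ 3 * l ^ 2 + 11025 * c ^ 4 * l ^ 2
    p = 441 * l ^ 2 * (c - 1) ^ 2 * (22 + 5 * c) ^ 2 - (c ^ 2 - 172 * c + 196)
      ∧ Irreducible p :=
  shapovalov6_factor_identity_and_irreducible_general (IsUnit.mk0 6510 (by norm_num))
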